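/- Let h be a separable complex Hilbert space and let A, B be bounded selfadjoint operators on h with 0 ≤ A ≤ 1 and 0 ≤ B ≤ 1, and suppose Q = A − B is NOT Hilbert–Schmidt, i.e., ∑_i ‖Q e_i‖² = ∞ for some (equivalently every) orthonormal basis (e_i). Then for every λ ∈ (−1,1), every t ≥ 0, and every orthonormal basis (e_i) of h: ∑_i ⟨e_i, R_{λ,t}(B) Q R_{λ,t}(A) Q R_{λ,t}(B) e_i⟩ = ∞ (all terms are nonnegative since the operator is positive). -/

import Mathlib

/-!
The operators `M_C = 1 + λ(1 − 2C) + t` are selfadjoint and coercive,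
`re ⟪M_C x, x⟫ ≥ (1 − |λ|) ‖x‖²`, hence invertible with inverse `R_C`. Writing `x = Q R_B e_i` and
`y = R_A x`, the `i`-th term of the series is `re ⟪x, R_A x⟫ = re ⟪M_A y, y⟫ ≥ (1 − |λ|) ‖y‖²`, so
the series dominates `(1 − |λ|)` times the squared Hilbert–Schmidt norm of `R_A Q R_B`. If that norm
were finite, so would be that of `Q = M_A (R_A Q R_B) M_B`, because the Hilbert–Schmidt operators
form a two-sided ideal. The ideal property and the independence of the basis both come from
Parseval's identity, which gives `‖T‖₂ = ‖T†‖₂` across any two bases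
(`hsNormSq_adjoint`, `hsNormSq_mul_mul_le`).
-/

open scoped InnerProductSpace ENNReal

/-- The resolvent `R_{λ,t}(C) = (1 + λ(1−2C) + t)⁻¹` of a bounded operator `C`
(defined via `Ring.inverse`, which gives the genuine inverse when it exists). -/
noncomputable def resolventOp {H : Type*} [NormedAddCommGroup H] [InnerProductSpace ℂ H]
    [CompleteSpace H] (l t : ℝ) (C : H →L[ℂ] H) : H →L[ℂ] H :=
  Ring.inverse (1 + (l:ℂ) • (1 - 2 • C) + (t:ℂ) • 1)

section HilbertSchmidt

set_option linter.unusedSectionVars false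

variable {H : Type*} [NormedAddCommGroup H] [InnerProductSpace ℂ H] [CompleteSpace H]

/-- The squared Hilbert–Schmidt norm of `T`, computed in the orthonormal basis `e`, with values in
`[0, ∞]`. -/
noncomputable def hsNormSq {ι : Type*} (e : HilbertBasis ι ℂ H) (T : H →L[ℂ] H) : ℝ≥0∞ :=
  ∑' i, ENNReal.ofReal (‖T (e i)‖ ^ 2)

lemma parseval_ennreal {ι : Type*} (e : HilbertBasis ι ℂ H) (x : H) :
    ∑' i, ENNReal.ofReal (‖⟪e i, x⟫_ℂ‖ ^ 2) = ENNReal.ofReal (‖x‖ ^ 2) := by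
  have h : HasSum (fun i => ‖⟪e i, x⟫_ℂ‖ ^ 2) (‖x‖ ^ 2) := by
    have h1 := Complex.hasSum_re (e.hasSum_inner_mul_inner x x)
    convert h1 using 1
    · ext i
      rw [← inner_conj_symm x (e i), ← Complex.normSq_eq_conj_mul_self, Complex.ofReal_re,
        Complex.normSq_eq_norm_sq]
    · exact (inner_self_eq_norm_sq (𝕜 := ℂ) x).symm
  rw [← ENNReal.ofReal_tsum_of_nonneg (fun i => by positivity) h.summable, h.tsum_eq]

/-- The Hilbert–Schmidt norm is invariant under the adjoint, with independently chosen bases on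
the two sides: both sides equal the double sum of `|⟪f j, T (e i)⟫|²`. -/
lemma hsNormSq_adjoint {ι κ : Type*} (e : HilbertBasis ι ℂ H) (f : HilbertBasis κ ℂ H)
    (T : H →L[ℂ] H) : hsNormSq f (star T) = hsNormSq e T := by
  unfold hsNormSq
  simp_rw [← parseval_ennreal e (star T _), ← parseval_ennreal f (T _)]
  rw [ENNReal.tsum_comm]
  refine tsum_congr fun i => tsum_congr fun j => ?_
  rw [ContinuousLinearMap.star_eq_adjoint, ContinuousLinearMap.adjoint_inner_right,
    norm_inner_symm]

lemma hsNormSq_mul_le {ι : Type*} (e : HilbertBasis ι ℂ H) (S T : H →L[ℂ] H) :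
    hsNormSq e (S * T) ≤ ENNReal.ofReal (‖S‖ ^ 2) * hsNormSq e T := by
  unfold hsNormSq
  rw [← ENNReal.tsum_mul_left]
  refine ENNReal.tsum_le_tsum fun i => ?_
  rw [← ENNReal.ofReal_mul (by positivity), ← mul_pow]
  exact ENNReal.ofReal_le_ofReal (pow_le_pow_left₀ (norm_nonneg _) (S.le_opNorm _) 2)

/-- The two-sided ideal property of Hilbert–Schmidt operators, with independently chosen bases. -/
lemma hsNormSq_mul_mul_le {ι κ : Type*} (e : HilbertBasis ι ℂ H) (f : HilbertBasis κ ℂ H)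
    (S T U : H →L[ℂ] H) :
    hsNormSq f (S * T * U) ≤
      ENNReal.ofReal (‖star U‖ ^ 2) * (ENNReal.ofReal (‖S‖ ^ 2) * hsNormSq e T) := by
  calc hsNormSq f (S * T * U) = hsNormSq e (star U * star (S * T)) := by
        rw [← star_mul, hsNormSq_adjoint f e]
    _ ≤ ENNReal.ofReal (‖star U‖ ^ 2) * hsNormSq e (star (S * T)) := hsNormSq_mul_le _ _ _
    _ ≤ _ := by
        rw [hsNormSq_adjoint e e]
        gcongr
        exact hsNormSq_mul_le _ _ _

lemma hsNormSq_eq_top {ι : Type*} (e : HilbertBasis ι ℂ H) (T : H →L[ℂ] H)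
    (hT : ¬ Summable fun i => ‖T (e i)‖ ^ 2) : hsNormSq e T = ⊤ := by
  by_contra h
  refine hT ((ENNReal.summable_toReal h).congr fun i => ?_)
  rw [ENNReal.toReal_ofReal (by positivity)]

/-- Coercivity of `M_C`, from `|‖x‖² − 2 re ⟪C x, x⟫| ≤ ‖x‖²` for `0 ≤ C ≤ 1`. -/
lemma coercive_of_mem_Icc {C : H →L[ℂ] H} (h0 : 0 ≤ C) (h1 : C ≤ 1) {l t : ℝ} (ht : 0 ≤ t)
    (x : H) :
    (1 - |l|) * ‖x‖ ^ 2 ≤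
      (⟪(1 + (l:ℂ) • (1 - 2 • C) + (t:ℂ) • 1 : H →L[ℂ] H) x, x⟫_ℂ).re := by
  have hp0 : 0 ≤ (⟪C x, x⟫_ℂ).re :=
    ((ContinuousLinearMap.nonneg_iff_isPositive C).1 h0).re_inner_nonneg_left x
  have hp1 : 0 ≤ (⟪(1 - C) x, x⟫_ℂ).re :=
    ((ContinuousLinearMap.le_def C 1).1 h1).re_inner_nonneg_left x
  have hxx : (⟪x, x⟫_ℂ).re = ‖x‖ ^ 2 := inner_self_eq_norm_sq (𝕜 := ℂ) x
  have hp1' : (⟪C x, x⟫_ℂ).re ≤ ‖x‖ ^ 2 := by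
    rw [sub_apply, one_apply_eq_self, inner_sub_left, Complex.sub_re, hxx] at hp1
    linarith
  have key : (⟪(1 + (l:ℂ) • (1 - 2 • C) + (t:ℂ) • 1 : H →L[ℂ] H) x, x⟫_ℂ).re
      = ‖x‖ ^ 2 + l * (‖x‖ ^ 2 - 2 * (⟪C x, x⟫_ℂ).re) + t * ‖x‖ ^ 2 := by
    simp only [two_smul, add_apply, smul_apply,
      sub_apply, one_apply_eq_self, inner_add_left,
      inner_sub_left, inner_smul_left, Complex.conj_ofReal, Complex.add_re, Complex.sub_re,
      Complex.re_ofReal_mul, hxx]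
    ring
  rw [key]
  have habs : |‖x‖ ^ 2 - 2 * (⟪C x, x⟫_ℂ).re| ≤ ‖x‖ ^ 2 := by
    rw [abs_le]; constructor <;> linarith
  have hmul := neg_abs_le (l * (‖x‖ ^ 2 - 2 * (⟪C x, x⟫_ℂ).re))
  rw [abs_mul] at hmul
  nlinarith [mul_le_mul_of_nonneg_left habs (abs_nonneg l), mul_nonneg ht (sq_nonneg ‖x‖)]

lemma isUnit_of_mem_Icc {C : H →L[ℂ] H} (h0 : 0 ≤ C) (h1 : C ≤ 1) {l t : ℝ} (hl : |l| < 1)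
    (ht : 0 ≤ t) : IsUnit (1 + (l:ℂ) • (1 - 2 • C) + (t:ℂ) • 1 : H →L[ℂ] H) := by
  refine ContinuousLinearMap.isUnit_of_forall_le_norm_inner_map _
    (c := ⟨1 - |l|, by linarith⟩) (show (0:ℝ) < 1 - |l| by linarith) fun x => ?_
  rw [mul_comm]
  exact (coercive_of_mem_Icc h0 h1 ht x).trans (Complex.re_le_norm _)

lemma isSelfAdjoint_resolventOp {C : H →L[ℂ] H} (hC : IsSelfAdjoint C) (l t : ℝ) :
    IsSelfAdjoint (resolventOp l t C) := by
  refine IsSelfAdjoint.ringInverse ?_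
  have hr : ∀ r : ℝ, IsSelfAdjoint (r : ℂ) := fun r => Complex.conj_ofReal r
  have h1 : IsSelfAdjoint (1 : H →L[ℂ] H) := IsSelfAdjoint.one _
  rw [two_smul]
  exact (h1.add ((hr l).smul (h1.sub (hC.add hC)))).add ((hr t).smul h1)

end HilbertSchmidt


/-- For bounded selfadjoint `0 ≤ A, B ≤ 1` on a separable complex Hilbert space such that
`Q = A − B` is NOT Hilbert–Schmidt (the sum `∑ ‖Q e_i‖²` diverges in some, equivalently
every, orthonormal basis), for every `λ ∈ (−1,1)`, `t ≥ 0` and every orthonormal basis: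
`∑_i ⟨e_i, R_{λ,t}(B) Q R_{λ,t}(A) Q R_{λ,t}(B) e_i⟩ = ∞` (sum taken in `[0,∞]`; all terms
are nonnegative since the operator is positive). -/
theorem tsum_inner_resolvent_eq_top_of_not_hilbertSchmidt
    {H : Type*} [NormedAddCommGroup H] [InnerProductSpace ℂ H] [CompleteSpace H]
    [TopologicalSpace.SeparableSpace H]
    (A B : H →L[ℂ] H) (hA : IsSelfAdjoint A) (hB : IsSelfAdjoint B)
    (hA0 : 0 ≤ A) (hA1 : A ≤ 1) (hB0 : 0 ≤ B) (hB1 : B ≤ 1)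
    {ι₀ : Type*} (e₀ : HilbertBasis ι₀ ℂ H)
    (hQ : ¬ Summable fun i : ι₀ => ‖(A - B) (e₀ i)‖^2) :
    ∀ (l t : ℝ), l ∈ Set.Ioo (-1:ℝ) 1 → 0 ≤ t →
      ∀ {ι : Type*} (e : HilbertBasis ι ℂ H),
        ∑' i : ι, ENNReal.ofReal
            (⟪e i, (resolventOp l t B * (A - B) * resolventOp l t A * (A - B)
              * resolventOp l t B) (e i)⟫_ℂ).re = ⊤ := by
  intro l t hl ht ι e
  have hl' : |l| < 1 := abs_lt.2 hl
  set RA := resolventOp l t A with hRA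
  set RB := resolventOp l t B with hRB
  set MA : H →L[ℂ] H := 1 + (l:ℂ) • (1 - 2 • A) + (t:ℂ) • 1 with hMA
  set MB : H →L[ℂ] H := 1 + (l:ℂ) • (1 - 2 • B) + (t:ℂ) • 1 with hMB
  have hA' : MA * RA = 1 := Ring.mul_inverse_cancel _ (isUnit_of_mem_Icc hA0 hA1 hl' ht)
  have hB' : RB * MB = 1 := Ring.inverse_mul_cancel _ (isUnit_of_mem_Icc hB0 hB1 hl' ht)
  have hRBs : IsSelfAdjoint RB := isSelfAdjoint_resolventOp hB l t
  have hQs : IsSelfAdjoint (A - B) := hA.sub hB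
  have hterm : ∀ i, (1 - |l|) * ‖(RA * (A - B) * RB) (e i)‖ ^ 2 ≤
      (⟪e i, (RB * (A - B) * RA * (A - B) * RB) (e i)⟫_ℂ).re := by
    intro i
    have hmove : ⟪e i, (RB * (A - B) * RA * (A - B) * RB) (e i)⟫_ℂ
        = ⟪(A - B) (RB (e i)), (RA * (A - B) * RB) (e i)⟫_ℂ :=
      ((hQs.isSymmetric _ _).trans (hRBs.isSymmetric _ _)).symm
    have hx : (A - B) (RB (e i)) = MA ((RA * (A - B) * RB) (e i)) :=
      (DFunLike.congr_fun hA' ((A - B) (RB (e i)))).symm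
    rw [hmove, hx]
    exact coercive_of_mem_Icc hA0 hA1 ht _
  have htop : hsNormSq e (RA * (A - B) * RB) = ⊤ := by
    have hQ' : A - B = MA * (RA * (A - B) * RB) * MB := by
      calc A - B = (MA * RA) * (A - B) * (RB * MB) := by rw [hA', hB', one_mul, mul_one]
        _ = _ := by simp only [mul_assoc]
    by_contra hfin
    have hle := hsNormSq_mul_mul_le e e₀ MA (RA * (A - B) * RB) MB
    rw [← hQ', hsNormSq_eq_top e₀ _ hQ, top_le_iff] at hle
    exact ENNReal.mul_ne_top ENNReal.ofReal_ne_top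
      (ENNReal.mul_ne_top ENNReal.ofReal_ne_top hfin) hle
  have hc : ENNReal.ofReal (1 - |l|) ≠ 0 := by
    rw [Ne, ENNReal.ofReal_eq_zero, not_le]; linarith
  rw [← top_le_iff, ← ENNReal.mul_top hc, ← htop, hsNormSq, ← ENNReal.tsum_mul_left]
  refine ENNReal.tsum_le_tsum fun i => ?_
  rw [← ENNReal.ofReal_mul (by linarith)]
  exact ENNReal.ofReal_le_ofReal (hterm i)
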